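/- arXiv:2005.11956 — 3 statements merged into one kernel-verified Lean document; each statement's English description precedes it below -/
import Mathlib

section
/- Let Γ be a finitely generated group, N ≥ 1, and c_1,…,c_N ∈ ℕ with n := Σ_{i=1}^N i·c_i ≥ 1. Then the number of homomorphisms φ : Γ → S_n such that for each i ∈ {1,…,N} the action of φ(Γ) on {1,…,n} has exactly c_i orbits of size i (and no orbits of size greater than N) equals n! · Π_{i=1}^N a_i(Γ)^{c_i} / ( i^{c_i} · c_i! ). -/
open Filter Topology Asymptotics
open scoped TensorProduct

/-- `a_n(G)`: the number of index `n` subgroups of `G`. -/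
noncomputable def subgroupCount (G : Type*) [Group G] (n : ℕ) : ℕ :=
  Nat.card {H : Subgroup G // H.index = n}

/-- the number of orbits of size `i` of the action of `φ(G)` on `{1,…,n}` -/
noncomputable def orbitCount {G : Type*} [Group G] {n : ℕ}
    (φ : G →* Equiv.Perm (Fin n)) (i : ℕ) : ℕ :=
  Nat.card {O : Set (Fin n) // (∃ x : Fin n, O = {y | ∃ γ : G, φ γ x = y}) ∧ O.ncard = i}

/-!
Count in two ways the pairs consisting of an action `φ` of `Γ` on a set of `n` points and a choice
of base points, one in each orbit, labelled so that the `k`-th orbit has a prescribed size `d k`.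

For a fixed `φ`, orbits of equal size may be relabelled and every base point may be moved within its
orbit, which gives `∏ c_i! * ∏ i ^ c_i` choices. On the other hand, the stabilizers of the base
points form a family of subgroups `H k` of index `d k`, and the pairs with a given family correspond
to the `n!` bijections from the disjoint union of the coset spaces `Γ ⧸ H k` to the `n` points.
-/

section Fibers

variable {α β ι Ω κ : Type*}

theorem natCard_eq_mul_of_natCard_fiber_eq (f : α → β) {m : ℕ}
    (hf : ∀ y, Nat.card {x // f x = y} = m) : Nat.card α = Nat.card β * m := by
  rcases eq_or_ne m 0 with rfl | hm
  · -- A nonempty fiber whose `Nat.card` is `0` is infinite, and then so is `α`.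
    rw [mul_zero, Nat.card_eq_zero, or_iff_not_imp_left, not_isEmpty_iff]
    rintro ⟨x⟩
    have : Infinite {x' // f x' = f x} :=
      (Nat.card_eq_zero.1 (hf (f x))).resolve_left fun h => h.elim ⟨x, rfl⟩
    exact Infinite.of_injective (Subtype.val : {x' // f x' = f x} → α) Subtype.val_injective
  · have fiberEquiv (y : β) : {x // f x = y} ≃ Fin m :=
      have : Finite {x // f x = y} := Nat.finite_of_card_ne_zero ((hf y).trans_ne hm)
      Finite.equivFinOfCardEq (hf y)
    rw [Nat.card_congr ((Equiv.sigmaFiberEquiv f).symm.trans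
      ((Equiv.sigmaCongrRight fiberEquiv).trans (Equiv.sigmaEquivProd _ _))),
      Nat.card_prod, Nat.card_fin]

theorem natCard_subtype_prod_eq_mul {R : α → β → Prop} {P : α → Prop} {m : ℕ}
    (hRP : ∀ a b, R a b → P a) (hR : ∀ a, P a → Nat.card {b // R a b} = m) :
    Nat.card {p : α × β // R p.1 p.2} = Nat.card {a // P a} * m := by
  refine natCard_eq_mul_of_natCard_fiber_eq (fun p => ⟨p.1.1, hRP _ _ p.2⟩) ?_
  rintro ⟨a, ha⟩
  rw [← hR a ha]
  refine (Nat.card_eq_of_bijective (fun b => ⟨⟨(a, b.1), b.2⟩, rfl⟩) ⟨?_, ?_⟩).symm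
  · exact fun b b' h => Subtype.ext (congrArg (fun p => p.1.1.2) h)
  · rintro ⟨⟨⟨a', b⟩, hb⟩, h⟩
    obtain rfl : a' = a := congrArg Subtype.val h
    exact ⟨⟨b, hb⟩, rfl⟩

theorem exists_equiv_comp_eq_iff_natCard_fiber_eq [Finite ι] [Finite Ω]
    (s : Ω → κ) (d : ι → κ) :
    (∃ e : ι ≃ Ω, s ∘ e = d) ↔ ∀ i, Nat.card {ω // s ω = i} = Nat.card {k // d k = i} := by
  constructor
  · rintro ⟨e, rfl⟩ i
    exact Nat.card_congr (e.subtypeEquivOfSubtype (p := fun ω => s ω = i)).symm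
  · intro h
    have fiberEquiv (i : κ) : {k // d k = i} ≃ {ω // s ω = i} := (Finite.card_eq.1 (h i).symm).some
    exact ⟨Equiv.ofFiberEquiv fiberEquiv, funext (Equiv.ofFiberEquiv_map fiberEquiv)⟩

theorem natCard_equiv_comp_eq {s : Ω → κ} {d : ι → κ} (e : ι ≃ Ω) (he : s ∘ e = d) :
    Nat.card {e' : ι ≃ Ω // s ∘ e' = d} = Nat.card {g : Equiv.Perm ι // d ∘ g = d} := by
  subst he
  refine (Nat.card_congr (((Equiv.refl ι).equivCongr e).subtypeEquiv fun g => ?_)).symm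
  rfl

theorem natCard_equiv_eq_factorial [Finite α] [Finite β] (h : Nat.card β = Nat.card α) :
    Nat.card (β ≃ α) = (Nat.card α).factorial := by
  obtain ⟨e⟩ := Finite.card_eq.1 h
  rw [← Nat.card_perm, Nat.card_congr (e.equivCongr (Equiv.refl α))]

end Fibers

section PermutationRepresentations

open MulAction

variable {Γ α ι : Type*} [Group Γ]

/-- The set of orbits of the action of `Γ` on `α` through `φ`. It is encoded as the orbit space of
the image of `φ`, which acts on `α` tautologically, so that no instance depending on `φ` is
needed. -/
abbrev OrbitSpace (φ : Γ →* Equiv.Perm α) : Type _ := orbitRel.Quotient φ.range α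

/-- The number of points of an orbit of `φ`. -/
noncomputable def orbitSize (φ : Γ →* Equiv.Perm α) (O : OrbitSpace φ) : ℕ :=
  O.orbit.ncard

/-- The stabilizer in `Γ` of a point for the action through `φ`. -/
def pointStabilizer (φ : Γ →* Equiv.Perm α) (x : α) : Subgroup Γ :=
  (stabilizer (Equiv.Perm α) x).comap φ

theorem mem_pointStabilizer {φ : Γ →* Equiv.Perm α} {x : α} {γ : Γ} :
    γ ∈ pointStabilizer φ x ↔ φ γ x = x :=
  Iff.rfl

theorem mem_orbit_range {φ : Γ →* Equiv.Perm α} {x y : α} :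
    y ∈ orbit φ.range x ↔ ∃ γ, φ γ x = y := by
  constructor
  · rintro ⟨⟨_, γ, rfl⟩, rfl⟩
    exact ⟨γ, rfl⟩
  · rintro ⟨γ, rfl⟩
    exact ⟨⟨φ γ, γ, rfl⟩, rfl⟩

theorem index_pointStabilizer (φ : Γ →* Equiv.Perm α) (x : α) :
    (pointStabilizer φ x).index = (orbit φ.range x).ncard :=
  (Subgroup.index_comap _ φ).trans (index_stabilizer φ.range x)

theorem apply_eq_apply_iff_coset_eq {φ : Γ →* Equiv.Perm α} {x : α} {γ δ : Γ} :
    φ γ x = φ δ x ↔ (γ : Γ ⧸ pointStabilizer φ x) = δ := by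
  rw [QuotientGroup.eq, mem_pointStabilizer, map_mul, Equiv.Perm.mul_apply, map_inv,
    Equiv.Perm.inv_eq_iff_eq, eq_comm]

/-- `b` picks exactly one base point from every orbit of `φ`. -/
def IsOrbitTransversal (φ : Γ →* Equiv.Perm α) (b : ι → α) : Prop :=
  Function.Bijective fun k => (Quotient.mk'' (b k) : OrbitSpace φ)

variable (Γ) in
/-- The homomorphism `Γ →* Equiv.Perm α` obtained by transporting the action on a `Γ`-set `Y`
along a bijection `Y ≃ α`. -/
def transportAction {Y : Type*} [MulAction Γ Y] (f : Y ≃ α) : Γ →* Equiv.Perm α :=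
  f.permCongrHom.toMonoidHom.comp (toPermHom Γ Y)

variable (Γ) in
theorem transportAction_apply {Y : Type*} [MulAction Γ Y] (f : Y ≃ α) (γ : Γ) (y : Y) :
    transportAction Γ f γ (f y) = f (γ • y) :=
  congrArg (fun z => f (γ • z)) (f.symm_apply_apply y)

theorem transportAction_eq_iff {Y : Type*} [MulAction Γ Y] {f : Y ≃ α} {φ : Γ →* Equiv.Perm α} :
    transportAction Γ f = φ ↔ ∀ γ y, φ γ (f y) = f (γ • y) := by
  constructor
  · rintro rfl
    exact transportAction_apply Γ f
  · intro h
    ext γ x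
    obtain ⟨y, rfl⟩ := f.surjective x
    rw [transportAction_apply, h]

section CosetModel

variable {H : ι → Subgroup Γ}

/-- The points of `α` labelled by the trivial cosets under `f`; they are base points of the orbits
of `transportAction Γ f`. -/
def basePoint (f : (Σ k, Γ ⧸ H k) ≃ α) (k : ι) : α :=
  f ⟨k, (1 : Γ)⟩

theorem transportAction_basePoint (f : (Σ k, Γ ⧸ H k) ≃ α) (γ : Γ) (k : ι) :
    transportAction Γ f γ (basePoint f k) = f ⟨k, γ⟩ := by
  rw [basePoint, transportAction_apply, Sigma.smul_mk, Quotient.smul_coe, smul_eq_mul, mul_one]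

theorem pointStabilizer_basePoint (f : (Σ k, Γ ⧸ H k) ≃ α) (k : ι) :
    pointStabilizer (transportAction Γ f) (basePoint f k) = H k := by
  ext γ
  rw [mem_pointStabilizer, transportAction_basePoint, basePoint, f.apply_eq_iff_eq,
    sigma_mk_injective.eq_iff, eq_comm, QuotientGroup.eq, inv_one, one_mul]

theorem isOrbitTransversal_basePoint (f : (Σ k, Γ ⧸ H k) ≃ α) :
    IsOrbitTransversal (transportAction Γ f) (basePoint f) := by
  constructor
  · intro k k' h
    obtain ⟨γ, hγ⟩ := mem_orbit_range.1 (Quotient.eq''.1 h)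
    rw [transportAction_basePoint, basePoint, f.apply_eq_iff_eq] at hγ
    exact (Sigma.mk.inj_iff.1 hγ).1.symm
  · intro O
    induction O using Quotient.inductionOn' with | _ x
    obtain ⟨⟨k, q⟩, rfl⟩ := f.surjective x
    induction q using QuotientGroup.induction_on with | _ γ
    refine ⟨k, Quotient.eq''.2 (mem_orbit_symm.1 (mem_orbit_range.2 ⟨γ, ?_⟩))⟩
    exact transportAction_basePoint f γ k

theorem eq_of_transportAction_eq_of_basePoint_eq {f f' : (Σ k, Γ ⧸ H k) ≃ α}
    (hφ : transportAction Γ f = transportAction Γ f') (hb : basePoint f = basePoint f') :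
    f = f' := by
  ext ⟨k, q⟩
  induction q using QuotientGroup.induction_on with | _ γ
  rw [← transportAction_basePoint, ← transportAction_basePoint, hφ, hb]

theorem IsOrbitTransversal.exists_equiv {φ : Γ →* Equiv.Perm α} {b : ι → α}
    (hb : IsOrbitTransversal φ b) :
    ∃ f : (Σ k, Γ ⧸ pointStabilizer φ (b k)) ≃ α, transportAction Γ f = φ ∧ basePoint f = b := by
  let cosetMap (p : Σ k, Γ ⧸ pointStabilizer φ (b k)) : α :=
    Quotient.liftOn' p.2 (fun γ => φ γ (b p.1)) fun _ _ h =>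
      apply_eq_apply_iff_coset_eq.2 (Quotient.sound' h)
  have cosetMap_mk (k : ι) (γ : Γ) : cosetMap ⟨k, γ⟩ = φ γ (b k) := rfl
  have cosetMap_injective : Function.Injective cosetMap := by
    rintro ⟨k, q⟩ ⟨k', q'⟩ h
    induction q using QuotientGroup.induction_on with | _ γ
    induction q' using QuotientGroup.induction_on with | _ δ
    rw [cosetMap_mk, cosetMap_mk] at h
    have same_orbit : b k ∈ orbit φ.range (b k') :=
      mem_orbit_range.2 ⟨γ⁻¹ * δ, by simp [← h]⟩
    obtain rfl : k = k' := hb.1 (Quotient.eq''.2 same_orbit)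
    rw [apply_eq_apply_iff_coset_eq.1 h]
  have cosetMap_surjective : Function.Surjective cosetMap := by
    intro x
    obtain ⟨k, hk⟩ := hb.2 (Quotient.mk'' x)
    obtain ⟨γ, hγ⟩ := mem_orbit_range.1 (mem_orbit_symm.1 (Quotient.eq''.1 hk))
    exact ⟨⟨k, γ⟩, hγ⟩
  refine ⟨Equiv.ofBijective cosetMap ⟨cosetMap_injective, cosetMap_surjective⟩,
    transportAction_eq_iff.2 ?_, ?_⟩
  · rintro γ ⟨k, q⟩
    induction q using QuotientGroup.induction_on with | _ δ
    exact DFunLike.congr_fun (map_mul φ γ δ).symm (b k)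
  · funext k
    exact DFunLike.congr_fun (map_one φ) (b k)

/-- Bijections from the disjoint union of the coset spaces `Γ ⧸ H k` onto `α` correspond to actions
of `Γ` on `α` with one base point chosen in each orbit, the `k`-th one having stabilizer `H k`. -/
noncomputable def cosetModelEquiv (H : ι → Subgroup Γ) :
    ((Σ k, Γ ⧸ H k) ≃ α) ≃ {p : (Γ →* Equiv.Perm α) × (ι → α) //
      IsOrbitTransversal p.1 p.2 ∧ ∀ k, pointStabilizer p.1 (p.2 k) = H k} :=
  Equiv.ofBijective
    (fun f => ⟨(transportAction Γ f, basePoint f),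
      isOrbitTransversal_basePoint f, pointStabilizer_basePoint f⟩)
    ⟨fun _ _ h => eq_of_transportAction_eq_of_basePoint_eq
        (congrArg (fun p => p.1.1) h) (congrArg (fun p => p.1.2) h), by
      rintro ⟨⟨φ, b⟩, hb, hH⟩
      obtain rfl : (fun k => pointStabilizer φ (b k)) = H := funext hH
      obtain ⟨f, hφ, hfb⟩ := hb.exists_equiv
      exact ⟨f, Subtype.ext (Prod.ext hφ hfb)⟩⟩

end CosetModel

/-- The orbits of `φ` have sizes `d k`, where `k` runs through the index type `ι`. -/
def HasOrbitType (φ : Γ →* Equiv.Perm α) (d : ι → ℕ) : Prop :=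
  ∃ e : ι ≃ OrbitSpace φ, orbitSize φ ∘ e = d

/-- `b` picks exactly one base point from every orbit of `φ`, the `k`-th one from an orbit of size
`d k`. -/
structure IsBasePointSystem (φ : Γ →* Equiv.Perm α) (d : ι → ℕ) (b : ι → α) : Prop where
  isOrbitTransversal : IsOrbitTransversal φ b
  ncard_orbit (k : ι) : (orbit φ.range (b k)).ncard = d k

/-- The labelling of the orbits of `φ` by `ι` induced by base points. -/
noncomputable def IsBasePointSystem.orbitLabelling {φ : Γ →* Equiv.Perm α} {d : ι → ℕ} {b : ι → α}
    (hb : IsBasePointSystem φ d b) :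
    {e : ι ≃ OrbitSpace φ // orbitSize φ ∘ e = d} :=
  ⟨Equiv.ofBijective _ hb.isOrbitTransversal, funext hb.ncard_orbit⟩

theorem IsBasePointSystem.hasOrbitType {φ : Γ →* Equiv.Perm α} {d : ι → ℕ} {b : ι → α}
    (hb : IsBasePointSystem φ d b) : HasOrbitType φ d :=
  ⟨_, hb.orbitLabelling.2⟩

theorem isBasePointSystem_iff_isOrbitTransversal {φ : Γ →* Equiv.Perm α} {d : ι → ℕ} {b : ι → α}
    (hd : ∀ k, (pointStabilizer φ (b k)).index = d k) :
    IsBasePointSystem φ d b ↔ IsOrbitTransversal φ b :=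
  ⟨fun hb => hb.isOrbitTransversal,
    fun hb => ⟨hb, fun k => (index_pointStabilizer φ (b k)).symm.trans (hd k)⟩⟩

theorem isBasePointSystem_of_mem_orbit {φ : Γ →* Equiv.Perm α} {d : ι → ℕ} {b : ι → α}
    (e : ι ≃ OrbitSpace φ) (he : orbitSize φ ∘ e = d)
    (hb : ∀ k, b k ∈ (e k).orbit) : IsBasePointSystem φ d b := by
  have mk_eq (k : ι) : (Quotient.mk'' (b k) : OrbitSpace φ) = e k :=
    orbitRel.Quotient.mem_orbit.1 (hb k)
  refine ⟨?_, fun k => ?_⟩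
  · rw [IsOrbitTransversal, funext mk_eq]
    exact e.bijective
  · rw [← orbitRel.Quotient.orbit_mk, mk_eq]
    exact congrFun he k

section Counting

variable [Fintype ι]

theorem natCard_isBasePointSystem_orbitLabelling_eq {φ : Γ →* Equiv.Perm α} {d : ι → ℕ}
    (e : {e : ι ≃ OrbitSpace φ // orbitSize φ ∘ e = d}) :
    Nat.card {b : {b : ι → α // IsBasePointSystem φ d b} // b.2.orbitLabelling = e} = ∏ k, d k := by
  have labelling_eq_iff (b : {b : ι → α // IsBasePointSystem φ d b}) :
      b.2.orbitLabelling = e ↔ ∀ k, b.1 k ∈ (e.1 k).orbit := by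
    simp only [orbitRel.Quotient.mem_orbit, Subtype.ext_iff, Equiv.ext_iff]
    rfl
  calc Nat.card {b : {b : ι → α // IsBasePointSystem φ d b} // b.2.orbitLabelling = e}
      = Nat.card (∀ k, (e.1 k).orbit) := Nat.card_congr <|
        (Equiv.subtypeEquivRight labelling_eq_iff).trans <|
        (Equiv.subtypeSubtypeEquivSubtype (isBasePointSystem_of_mem_orbit e.1 e.2 ·)).trans
          Equiv.subtypePiEquivPi
    _ = ∏ k, d k := by
        rw [Nat.card_pi]
        exact Finset.prod_congr rfl fun k _ => congrFun e.2 k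

theorem natCard_isBasePointSystem {φ : Γ →* Equiv.Perm α} {d : ι → ℕ} (hφ : HasOrbitType φ d) :
    Nat.card {b : ι → α // IsBasePointSystem φ d b} =
      Nat.card {g : Equiv.Perm ι // d ∘ g = d} * ∏ k, d k := by
  obtain ⟨e, he⟩ := hφ
  rw [← natCard_equiv_comp_eq e he]
  exact natCard_eq_mul_of_natCard_fiber_eq _ natCard_isBasePointSystem_orbitLabelling_eq

theorem natCard_pairs_isBasePointSystem_eq_natCard_hasOrbitType_mul (d : ι → ℕ) :
    Nat.card {p : (Γ →* Equiv.Perm α) × (ι → α) // IsBasePointSystem p.1 d p.2} =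
      Nat.card {φ : Γ →* Equiv.Perm α // HasOrbitType φ d} *
        (Nat.card {g : Equiv.Perm ι // d ∘ g = d} * ∏ k, d k) :=
  natCard_subtype_prod_eq_mul (R := fun φ b => IsBasePointSystem φ d b)
    (fun _ _ hb => hb.hasOrbitType) fun _ => natCard_isBasePointSystem

theorem natCard_cosetModel {H : ι → Subgroup Γ} (hH : ∀ k, (H k).index ≠ 0) :
    Nat.card (Σ k, Γ ⧸ H k) = ∑ k, (H k).index := by
  have (k : ι) : Finite (Γ ⧸ H k) := Nat.finite_of_card_ne_zero (hH k)
  exact Nat.card_sigma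

theorem natCard_pairs_isBasePointSystem_eq_prod_subgroupCount_mul [Finite α] {d : ι → ℕ}
    (hd : ∀ k, d k ≠ 0) (hsum : ∑ k, d k = Nat.card α) :
    Nat.card {p : (Γ →* Equiv.Perm α) × (ι → α) // IsBasePointSystem p.1 d p.2} =
      (∏ k, subgroupCount Γ (d k)) * (Nat.card α).factorial := by
  simp only [subgroupCount]
  rw [← Nat.card_pi]
  refine natCard_eq_mul_of_natCard_fiber_eq
    (fun p k => ⟨pointStabilizer p.1.1 (p.1.2 k),
      (index_pointStabilizer _ _).trans (p.2.ncard_orbit k)⟩) fun H => ?_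
  have hH (k : ι) : (H k).1.index ≠ 0 := (H k).2.trans_ne (hd k)
  have card_model : Nat.card (Σ k, Γ ⧸ (H k).1) = Nat.card α := by
    rw [natCard_cosetModel hH, ← hsum]
    exact Finset.sum_congr rfl fun k _ => (H k).2
  have (k : ι) : Finite (Γ ⧸ (H k).1) := Nat.finite_of_card_ne_zero (hH k)
  rw [← natCard_equiv_eq_factorial card_model, Nat.card_congr (cosetModelEquiv fun k => (H k).1)]
  let stabilizersEq (p : (Γ →* Equiv.Perm α) × (ι → α)) : Prop :=
    ∀ k, pointStabilizer p.1 (p.2 k) = (H k).1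
  refine Nat.card_congr <|
    (Equiv.subtypeEquivRight (q := fun p => stabilizersEq p.1) fun p => ?_).trans <|
    (Equiv.subtypeSubtypeEquivSubtypeInter _ stabilizersEq).trans <|
    Equiv.subtypeEquivRight fun p => and_congr_left fun hp => ?_
  · simp only [stabilizersEq, funext_iff, Subtype.ext_iff]
  · refine isBasePointSystem_iff_isOrbitTransversal fun k => ?_
    rw [hp, (H k).2]

theorem natCard_hasOrbitType_mul [Finite α] {d : ι → ℕ} (hd : ∀ k, d k ≠ 0)
    (hsum : ∑ k, d k = Nat.card α) :
    Nat.card {φ : Γ →* Equiv.Perm α // HasOrbitType φ d} *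
        (Nat.card {g : Equiv.Perm ι // d ∘ g = d} * ∏ k, d k) =
      (∏ k, subgroupCount Γ (d k)) * (Nat.card α).factorial := by
  rw [← natCard_pairs_isBasePointSystem_eq_natCard_hasOrbitType_mul,
    natCard_pairs_isBasePointSystem_eq_prod_subgroupCount_mul hd hsum]

end Counting

end PermutationRepresentations

section OrbitCounts

open MulAction

variable {Γ : Type*} [Group Γ] {s : Finset ℕ} {c : ℕ → ℕ}

/-- Labels for `c i` orbits of size `i`, for each `i ∈ s`. -/
abbrev OrbitLabel (s : Finset ℕ) (c : ℕ → ℕ) : Type :=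
  Σ i : s, Fin (c i)

/-- The size of the orbit that carries a given label. -/
abbrev labelSize (k : OrbitLabel s c) : ℕ :=
  k.1

theorem prod_labelSize {M : Type*} [CommMonoid M] (f : ℕ → M) :
    ∏ k : OrbitLabel s c, f (labelSize k) = ∏ i ∈ s, f i ^ c i := by
  rw [Fintype.prod_sigma, ← Finset.prod_coe_sort s]
  simp only [labelSize, Finset.prod_const, Finset.card_univ, Fintype.card_fin]

theorem sum_labelSize : ∑ k : OrbitLabel s c, labelSize k = ∑ i ∈ s, i * c i := by
  rw [Fintype.sum_sigma, ← Finset.sum_coe_sort s]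
  simp only [labelSize, Finset.sum_const, Finset.card_univ, Fintype.card_fin, smul_eq_mul, mul_comm]

theorem natCard_labelSize_eq_of_mem {i : ℕ} (hi : i ∈ s) :
    Nat.card {k : OrbitLabel s c // labelSize k = i} = c i := by
  have labelSize_eq_iff (k : OrbitLabel s c) : labelSize k = i ↔ k.1 = ⟨i, hi⟩ :=
    Subtype.coe_eq_iff.trans (exists_prop_of_true hi)
  rw [Nat.card_congr ((Equiv.subtypeEquivRight labelSize_eq_iff).trans
    (Equiv.sigmaSubtype (⟨i, hi⟩ : s))), Nat.card_fin]

theorem natCard_labelSize_eq_of_notMem {i : ℕ} (hi : i ∉ s) :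
    Nat.card {k : OrbitLabel s c // labelSize k = i} = 0 :=
  have : IsEmpty {k : OrbitLabel s c // labelSize k = i} := ⟨fun k => hi (k.2 ▸ k.1.1.2)⟩
  Nat.card_of_isEmpty

theorem natCard_perm_labelSize_comp_eq :
    Nat.card {g : Equiv.Perm (OrbitLabel s c) // labelSize ∘ g = labelSize} =
      ∏ i ∈ s, (c i).factorial := by
  have comp_eq_iff (g : Equiv.Perm (OrbitLabel s c)) :
      labelSize ∘ g = labelSize ↔ Sigma.fst ∘ g = Sigma.fst :=
    Subtype.val_injective.comp_left.eq_iff (a := Sigma.fst ∘ g)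
  have stabilizer_card := DomMulAct.stabilizer_ncard (Sigma.fst : OrbitLabel s c → s)
  rw [Nat.card_congr (Equiv.subtypeEquivRight comp_eq_iff), ← Finset.prod_coe_sort]
  refine stabilizer_card.trans (Finset.prod_congr rfl fun i _ => ?_)
  rw [← Nat.card_coe_set_eq]
  exact congrArg _ ((Nat.card_congr (Equiv.sigmaSubtype i)).trans (Nat.card_fin _))

variable {n : ℕ}

theorem setOf_exists_apply_eq {α : Type*} (φ : Γ →* Equiv.Perm α) (x : α) :
    {y | ∃ γ : Γ, φ γ x = y} = orbit φ.range x :=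
  Set.ext fun _ => mem_orbit_range.symm

theorem orbitCount_eq_natCard_orbitSize_eq (φ : Γ →* Equiv.Perm (Fin n)) (i : ℕ) :
    orbitCount φ i = Nat.card {O : OrbitSpace φ // orbitSize φ O = i} := by
  simp only [orbitCount, setOf_exists_apply_eq]
  let orbitSet (O : {O : OrbitSpace φ // orbitSize φ O = i}) :
      {S : Set (Fin n) // (∃ x, S = orbit φ.range x) ∧ S.ncard = i} :=
    ⟨O.1.orbit, ⟨O.1.out, orbitRel.Quotient.orbit_eq_orbit_out O.1 Quotient.out_eq'⟩, O.2⟩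
  refine (Nat.card_eq_of_bijective orbitSet ⟨fun O O' h => ?_, ?_⟩).symm
  · exact Subtype.ext (orbitRel.Quotient.orbit_injective (congrArg Subtype.val h))
  · rintro ⟨_, ⟨x, rfl⟩, hx⟩
    exact ⟨⟨Quotient.mk'' x, hx⟩, rfl⟩

theorem orbitSize_ne_zero {α : Type*} [Finite α] {φ : Γ →* Equiv.Perm α} (O : OrbitSpace φ) :
    orbitSize φ O ≠ 0 :=
  ((Set.ncard_pos (Set.toFinite _)).2 O.nonempty_orbit).ne'

theorem forall_orbitSize_le_iff {α : Type*} {φ : Γ →* Equiv.Perm α} {N : ℕ} :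
    (∀ O, orbitSize φ O ≤ N) ↔ ∀ x, {y | ∃ γ : Γ, φ γ x = y}.ncard ≤ N := by
  simp only [setOf_exists_apply_eq]
  exact Quotient.mk''_surjective.forall

theorem hasOrbitType_labelSize_iff {N : ℕ} {φ : Γ →* Equiv.Perm (Fin n)} :
    HasOrbitType φ (labelSize : OrbitLabel (Finset.Icc 1 N) c → ℕ) ↔
      (∀ i ∈ Finset.Icc 1 N, orbitCount φ i = c i) ∧
        ∀ x : Fin n, ({y | ∃ γ : Γ, φ γ x = y} : Set (Fin n)).ncard ≤ N := by
  rw [← forall_orbitSize_le_iff, HasOrbitType, exists_equiv_comp_eq_iff_natCard_fiber_eq]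
  simp only [← orbitCount_eq_natCard_orbitSize_eq]
  constructor
  · intro h
    refine ⟨fun i hi => (h i).trans (natCard_labelSize_eq_of_mem hi), fun O => ?_⟩
    by_contra hO
    have size_notMem : orbitSize φ O ∉ Finset.Icc 1 N := fun hmem => hO (Finset.mem_Icc.1 hmem).2
    have count_eq_zero := (h (orbitSize φ O)).trans (natCard_labelSize_eq_of_notMem size_notMem)
    rw [orbitCount_eq_natCard_orbitSize_eq, Finite.card_eq_zero_iff] at count_eq_zero
    exact count_eq_zero.false ⟨O, rfl⟩
  · rintro ⟨hcount, hle⟩ i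
    by_cases hi : i ∈ Finset.Icc 1 N
    · rw [hcount i hi, natCard_labelSize_eq_of_mem hi]
    · rw [natCard_labelSize_eq_of_notMem hi, orbitCount_eq_natCard_orbitSize_eq,
        Finite.card_eq_zero_iff]
      refine ⟨fun ⟨O, hO⟩ => hi (Finset.mem_Icc.2 ?_)⟩
      exact hO ▸ ⟨Nat.one_le_iff_ne_zero.2 (orbitSize_ne_zero O), hle O⟩

end OrbitCounts

/-- If some `c i ≠ 0` with infinitely many subgroups of index `i`, both sides are `0` by the
convention that `Nat.card` of an infinite type is `0`. -/
theorem hom_count_by_orbit_type_general (Γ : Type*) [Group Γ] (N : ℕ) (c : ℕ → ℕ) (n : ℕ)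
    (hn : n = ∑ i ∈ Finset.Icc 1 N, i * c i) :
    (Nat.card {φ : Γ →* Equiv.Perm (Fin n) //
        (∀ i ∈ Finset.Icc 1 N, orbitCount φ i = c i) ∧
        (∀ x : Fin n, ({y | ∃ γ : Γ, φ γ x = y} : Set (Fin n)).ncard ≤ N)} : ℚ) =
      (n.factorial : ℚ) * ∏ i ∈ Finset.Icc 1 N,
        (subgroupCount Γ i : ℚ) ^ (c i) / ((i : ℚ) ^ (c i) * (Nat.factorial (c i))) := by
  have ne_zero_of_mem {i : ℕ} (hi : i ∈ Finset.Icc 1 N) : i ≠ 0 :=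
    Nat.one_le_iff_ne_zero.1 (Finset.mem_Icc.1 hi).1
  have count := natCard_hasOrbitType_mul (Γ := Γ) (α := Fin n)
    (d := (labelSize : OrbitLabel (Finset.Icc 1 N) c → ℕ)) (fun k => ne_zero_of_mem k.1.2)
    (by rw [sum_labelSize, Nat.card_fin, hn])
  rw [natCard_perm_labelSize_comp_eq, prod_labelSize (subgroupCount Γ), prod_labelSize (fun i => i),
    Nat.card_fin, Nat.card_congr (Equiv.subtypeEquivRight fun _ => hasOrbitType_labelSize_iff),
    mul_comm (∏ i ∈ _, (c i).factorial), ← Finset.prod_mul_distrib] at count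
  have denominator_ne_zero : ∏ i ∈ Finset.Icc 1 N, ((i : ℚ) ^ c i * (c i).factorial) ≠ 0 :=
    Finset.prod_ne_zero_iff.2 fun i hi => by
      have := ne_zero_of_mem hi
      positivity
  rw [Finset.prod_div_distrib, mul_div_assoc', eq_div_iff denominator_ne_zero,
    mul_comm (n.factorial : ℚ)]
  exact_mod_cast count

theorem hom_count_by_orbit_type (Γ : Type*) [Group Γ] (hfg : Group.FG Γ)
    (N : ℕ) (hN : 1 ≤ N) (c : ℕ → ℕ) (n : ℕ)
    (hn : n = ∑ i ∈ Finset.Icc 1 N, i * c i) (hn1 : 1 ≤ n) :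
    (Nat.card {φ : Γ →* Equiv.Perm (Fin n) //
        (∀ i ∈ Finset.Icc 1 N, orbitCount φ i = c i) ∧
        (∀ x : Fin n, ({y | ∃ γ : Γ, φ γ x = y} : Set (Fin n)).ncard ≤ N)} : ℚ) =
      (n.factorial : ℚ) * ∏ i ∈ Finset.Icc 1 N,
        (subgroupCount Γ i : ℚ) ^ (c i) / ((i : ℚ) ^ (c i) * (Nat.factorial (c i))) :=
  hom_count_by_orbit_type_general Γ N c n hn
end

section
/- Let p, l, r ≥ 1. Then τ_{p,l,r} ≤ (1/(r·l))^{r/p} · exp( Σ_{i | p} (r·l)^{i/p} / (i·l) ), where τ_{p,l,r} := Σ_{k ∈ K(p,l,r)} Π_{j=1}^{p} 1/( (l·j)^{k_j} · k_j! ) and K(p, l, r) := { k ∈ ℕ^p : Σ_{i=1}^p k_i · i = r and k_i = 0 whenever gcd(i·l, p) ≠ i }, the sum in the exponential running over all positive divisors i of p. -/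
open Filter Topology Asymptotics
open scoped TensorProduct

/-- `τ_{p,l,r} = Σ_{k ∈ K(p,l,r)} Π_{j=1}^{p} 1/((l·j)^{k_j} k_j!)`, where `K(p,l,r)` is the
set of `k ∈ ℕ^p` with `Σ_j j·k_j = r` and `k_j = 0` whenever `gcd(j·l, p) ≠ j`. -/
noncomputable def tauQ (p l r : ℕ) : ℚ :=
  ∑ k ∈ Finset.filter
      (fun k => (∑ j : Fin p, (j.1 + 1) * k j) = r ∧
        ∀ j : Fin p, Nat.gcd ((j.1 + 1) * l) p ≠ j.1 + 1 → k j = 0)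
      (Fintype.piFinset fun _ : Fin p => Finset.range (r + 1)),
    ∏ j : Fin p, 1 / ((l * (j.1 + 1) : ℚ) ^ (k j) * (Nat.factorial (k j)))

/-!
The generating function `Σ_r τ_{p,l,r} x^r` is dominated coefficientwise by the product over
`j ∣ p` of the exponential series of `x^j / (j l)`. Its coefficients are nonnegative, so for every
`x > 0` the single term `τ_{p,l,r} x^r` is at most `exp (Σ_{j ∣ p} x^j / (j l))`. The choice
`x^p = r l` minimises `x⁻ʳ exp (x^p / (p l))`, the part of the bound coming from `j = p`.
-/

open scoped Nat

section ExponentialSeries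

variable {ι : Type*} [Fintype ι] (s : Finset (ι → ℕ)) {a : ι → ℝ}

theorem sum_prod_pow_div_factorial_le_exp_sum (ha : ∀ i, 0 ≤ a i) :
    ∑ k ∈ s, ∏ i, a i ^ k i / (k i)! ≤ Real.exp (∑ i, a i) := by
  classical
  have term_nonneg (i : ι) (m : ℕ) : 0 ≤ a i ^ m / m ! :=
    div_nonneg (pow_nonneg (ha i) m) (m !).cast_nonneg
  let N (i : ι) : ℕ := s.sup (· i)
  have subset_box : s ⊆ Fintype.piFinset fun i ↦ Finset.range (N i + 1) := fun k hk ↦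
    Fintype.mem_piFinset.2 fun i ↦
      Finset.mem_range_succ_iff.2 (Finset.le_sup (f := fun k : ι → ℕ ↦ k i) hk)
  calc ∑ k ∈ s, ∏ i, a i ^ k i / (k i)!
      ≤ ∑ k ∈ Fintype.piFinset fun i ↦ Finset.range (N i + 1), ∏ i, a i ^ k i / (k i)! :=
        Finset.sum_le_sum_of_subset_of_nonneg subset_box fun k _ _ ↦
          Finset.prod_nonneg fun i _ ↦ term_nonneg i (k i)
    _ = ∏ i, ∑ m ∈ Finset.range (N i + 1), a i ^ m / m ! :=
        (Finset.prod_univ_sum _ fun i m ↦ a i ^ m / m !).symm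
    _ ≤ ∏ i, Real.exp (a i) :=
        Finset.prod_le_prod (fun i _ ↦ Finset.sum_nonneg fun m _ ↦ term_nonneg i m)
          fun i _ ↦ Real.sum_le_exp_of_nonneg (ha i) _
    _ = Real.exp (∑ i, a i) := (Real.exp_sum _ _).symm

variable {s} {t : Finset ι}

theorem sum_prod_pow_div_factorial_le_exp_sum_of_support
    (hs : ∀ k ∈ s, ∀ i ∉ t, k i = 0) (ha : ∀ i ∈ t, 0 ≤ a i) :
    ∑ k ∈ s, ∏ i, a i ^ k i / (k i)! ≤ Real.exp (∑ i ∈ t, a i) := by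
  classical
  let b (i : ι) : ℝ := if i ∈ t then a i else 0
  have b_nonneg (i : ι) : 0 ≤ b i := by
    by_cases hi : i ∈ t <;> simp [b, hi, ha]
  have prod_eq (k : ι → ℕ) (hk : k ∈ s) :
      ∏ i, a i ^ k i / (k i)! = ∏ i, b i ^ k i / (k i)! :=
    Finset.prod_congr rfl fun i _ ↦ by
      by_cases hi : i ∈ t
      · simp [b, hi]
      · simp [hs k hk i hi]
  calc ∑ k ∈ s, ∏ i, a i ^ k i / (k i)!
      = ∑ k ∈ s, ∏ i, b i ^ k i / (k i)! := Finset.sum_congr rfl prod_eq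
    _ ≤ Real.exp (∑ i, b i) := sum_prod_pow_div_factorial_le_exp_sum s b_nonneg
    _ = Real.exp (∑ i ∈ t, a i) := by simp [b]

theorem sum_prod_pow_div_factorial_mul_pow_le_exp_sum {w : ι → ℕ} {r : ℕ} {x : ℝ}
    (hw : ∀ k ∈ s, ∑ i, w i * k i = r) (hs : ∀ k ∈ s, ∀ i ∉ t, k i = 0)
    (ha : ∀ i ∈ t, 0 ≤ a i) (hx : 0 ≤ x) :
    (∑ k ∈ s, ∏ i, a i ^ k i / (k i)!) * x ^ r ≤ Real.exp (∑ i ∈ t, a i * x ^ w i) := by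
  have absorb_pow (k : ι → ℕ) (hk : k ∈ s) :
      (∏ i, a i ^ k i / (k i)!) * x ^ r = ∏ i, (a i * x ^ w i) ^ k i / (k i)! := by
    rw [← hw k hk, ← Finset.prod_pow_eq_pow_sum, ← Finset.prod_mul_distrib]
    exact Finset.prod_congr rfl fun i _ ↦ by ring
  rw [Finset.sum_mul, Finset.sum_congr rfl absorb_pow]
  exact sum_prod_pow_div_factorial_le_exp_sum_of_support hs
    fun i hi ↦ mul_nonneg (ha i hi) (pow_nonneg hx _)

end ExponentialSeries

theorem sum_filter_succ_dvd_eq_sum_divisors {M : Type*} [AddCommMonoid M] (n : ℕ) (f : ℕ → M) :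
    ∑ j : Fin n with j.1 + 1 ∣ n, f (j.1 + 1) = ∑ d ∈ n.divisors, f d := by
  rw [Nat.divisors, Finset.sum_filter, Finset.sum_filter,
    Fin.sum_univ_eq_sum_range (fun j ↦ if j + 1 ∣ n then f (j + 1) else 0),
    Finset.range_eq_Ico, Finset.sum_Ico_add' (fun d ↦ if d ∣ n then f d else 0) 0 n 1, zero_add]

/-- The index set `K(p, l, r)` of the sum defining `τ_{p,l,r}`. The coordinate `k_i`, `1 ≤ i ≤ p`,
is `k j` with `i = j + 1`, and the box `k_i ≤ r`, implied by `∑ i * k_i = r`, makes the set a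
`Finset`. -/
def tauIndex (p l r : ℕ) : Finset (Fin p → ℕ) :=
  {k ∈ Fintype.piFinset fun _ ↦ Finset.range (r + 1) | ∑ j : Fin p, (j.1 + 1) * k j = r ∧
    ∀ j : Fin p, Nat.gcd ((j.1 + 1) * l) p ≠ j.1 + 1 → k j = 0}

section tauIndex

variable {p l r : ℕ} {k : Fin p → ℕ}

theorem sum_succ_mul_eq_of_mem_tauIndex (hk : k ∈ tauIndex p l r) :
    ∑ j : Fin p, (j.1 + 1) * k j = r :=
  (Finset.mem_filter.1 hk).2.1

theorem eq_zero_of_mem_tauIndex_of_not_dvd (hk : k ∈ tauIndex p l r) {j : Fin p}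
    (hj : ¬ j.1 + 1 ∣ p) : k j = 0 :=
  (Finset.mem_filter.1 hk).2.2 j fun hgcd ↦ hj (hgcd ▸ Nat.gcd_dvd_right _ _)

end tauIndex

theorem cast_tauQ_eq_sum_prod (p l r : ℕ) :
    (tauQ p l r : ℝ) =
      ∑ k ∈ tauIndex p l r, ∏ j : Fin p, (1 / ((j.1 + 1 : ℕ) * l : ℝ)) ^ k j / (k j)! := by
  simp only [tauQ, tauIndex, Rat.cast_sum, Rat.cast_prod]
  refine Finset.sum_congr rfl fun k _ ↦ Finset.prod_congr rfl fun j _ ↦ ?_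
  push_cast
  rw [one_div_pow, div_div, mul_comm (l : ℝ)]

theorem tauQ_mul_pow_le_exp_sum_divisors (p l r : ℕ) {x : ℝ} (hx : 0 ≤ x) :
    tauQ p l r * x ^ r ≤ Real.exp (∑ i ∈ p.divisors, x ^ i / (i * l)) := by
  have support_dvd (k : Fin p → ℕ) (hk : k ∈ tauIndex p l r) (j : Fin p)
      (hj : j ∉ ({j | j.1 + 1 ∣ p} : Finset (Fin p))) : k j = 0 :=
    eq_zero_of_mem_tauIndex_of_not_dvd hk (by simpa using hj)
  calc (tauQ p l r : ℝ) * x ^ r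
      ≤ Real.exp (∑ j : Fin p with j.1 + 1 ∣ p,
          1 / ((j.1 + 1 : ℕ) * l : ℝ) * x ^ (j.1 + 1)) := by
        rw [cast_tauQ_eq_sum_prod]
        exact sum_prod_pow_div_factorial_mul_pow_le_exp_sum
          (fun _ ↦ sum_succ_mul_eq_of_mem_tauIndex) support_dvd (fun _ _ ↦ by positivity) hx
    _ = Real.exp (∑ i ∈ p.divisors, x ^ i / (i * l)) := by
        rw [sum_filter_succ_dvd_eq_sum_divisors p fun i ↦ 1 / (i * l : ℝ) * x ^ i]
        simp only [one_div_mul_eq_div]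

theorem tau_bound (p l r : ℕ) (hp : 1 ≤ p) (hl : 1 ≤ l) (hr : 1 ≤ r) :
    ((tauQ p l r : ℚ) : ℝ) ≤ (1 / ((r : ℝ) * (l : ℝ))) ^ ((r : ℝ) / (p : ℝ)) *
      Real.exp (∑ i ∈ p.divisors, ((r : ℝ) * (l : ℝ)) ^ ((i : ℝ) / (p : ℝ)) / ((i : ℝ) * (l : ℝ))) := by
  have rl_pos : (0 : ℝ) < r * l := by positivity
  let x : ℝ := (r * l : ℝ) ^ (1 / p : ℝ)
  have x_pos : 0 < x := by positivity
  have rpow_eq (i : ℕ) : (r * l : ℝ) ^ (i / p : ℝ) = x ^ i := by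
    rw [← Real.rpow_mul_natCast rl_pos.le, one_div_mul_eq_div]
  simp only [one_div, Real.inv_rpow rl_pos.le, rpow_eq]
  rw [inv_mul_eq_div, le_div_iff₀ (pow_pos x_pos r)]
  exact tauQ_mul_pow_le_exp_sum_divisors p l r x_pos.le
end

section
/- Let (a_n)_{n ∈ ℕ} be a real sequence and suppose there exist C > 0, α > 0, β_1,…,β_m ∈ ℝ and γ_1,…,γ_m ∈ (0,1] such that a_n ∼ C · exp( α·n·log n + Σ_{i=1}^m β_i · n^{γ_i} ) as n → ∞ (i.e. the ratio tends to 1). Then Σ_{k=1}^{n−1} a_k · a_{n−k} / a_n = O( n^{−α} ) as n → ∞. -/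
open Filter Topology Asymptotics
open scoped TensorProduct

/-!
Write the comparison scale as `exp (φ n)` with `φ n = α n log n + ψ n`, `ψ n = ∑ βᵢ n ^ γᵢ`. For
`1 ≤ j ≤ l`, strong superadditivity of `x log x` makes the leading part of `φ j + φ l` fall short
of that of `φ (j + l)` by at least `α log (j + l)`, which is the factor `(j + l) ^ (-α)`, plus
`α ((j - 1) log 2 - log j)`. This linear gain beats the failure of superadditivity of `ψ`, which is
`o(j)` because each `γᵢ ≤ 1`; the borderline case `γᵢ = 1` contributes nothing. Hence the `k`-th
term of the convolution is `O(n ^ (-α))` times a geometric factor in `min k (n - k)`.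
-/

section Sublinear

lemma exists_le_mul_add_of_isLittleO {f : ℕ → ℝ} {ε : ℝ}
    (hf : f =o[atTop] fun n : ℕ => (n : ℝ)) (hε : 0 < ε) : ∃ M, ∀ n : ℕ, f n ≤ ε * n + M := by
  have h_bdd : IsBoundedUnder (· ≤ ·) atTop fun n : ℕ => f n - ε * n := by
    refine isBoundedUnder_of_eventually_le (a := 0) ?_
    filter_upwards [hf.bound hε] with n hn
    rw [Real.norm_eq_abs, Real.norm_natCast] at hn
    linarith [le_abs_self (f n)]
  obtain ⟨M, hM⟩ := h_bdd.bddAbove_range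
  exact ⟨M, fun n => by linarith [hM (Set.mem_range_self n)]⟩

lemma isLittleO_rpow_id_atTop {γ : ℝ} (hγ : γ < 1) :
    (fun x : ℝ => x ^ γ) =o[atTop] fun x => x := by
  have h_lim : Tendsto (fun x : ℝ => x ^ (-(1 - γ))) atTop (𝓝 0) :=
    tendsto_rpow_neg_atTop (sub_pos.2 hγ)
  refine isLittleO_of_tendsto' ?_ (h_lim.congr' ?_) <;>
    filter_upwards [eventually_gt_atTop 0] with x hx
  · exact fun h => absurd h hx.ne'
  · rw [neg_sub, Real.rpow_sub_one hx.ne']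

lemma abs_rpow_add_rpow_sub_rpow_le {γ x y : ℝ} (hγ : γ ≤ 1) (hx : 0 < x) (hxy : x ≤ y) :
    |x ^ γ + y ^ γ - (x + y) ^ γ| ≤ 2 * x ^ γ := by
  have hy : 0 < y := hx.trans_le hxy
  have hx_pow : 0 < x ^ γ := Real.rpow_pos_of_pos hx γ
  rw [abs_le]
  rcases le_or_gt 0 γ with h | h
  · have h_subadd := Real.rpow_add_le_add_rpow hx.le hy.le h hγ
    have h_mono : y ^ γ ≤ (x + y) ^ γ := Real.rpow_le_rpow hy.le (by linarith) h
    constructor <;> linarith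
  · have h_anti : y ^ γ ≤ x ^ γ := Real.rpow_le_rpow_of_nonpos hx hxy h.le
    have h_anti_add : (x + y) ^ γ ≤ y ^ γ := Real.rpow_le_rpow_of_nonpos hy (by linarith) h.le
    have h_pos : 0 < (x + y) ^ γ := by positivity
    constructor <;> linarith

/-- The sequence `ψ` is superadditive up to an error which is sublinear in the smaller index.
This is the property of the correction term in the exponent that makes the convolution estimate
work. -/
def HasSublinearDefect (ψ : ℕ → ℝ) : Prop :=
  ∃ f : ℕ → ℝ, f =o[atTop] (fun n : ℕ => (n : ℝ)) ∧
    ∀ j l : ℕ, 1 ≤ j → j ≤ l → ψ j + ψ l ≤ ψ (j + l) + f j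

namespace HasSublinearDefect

lemma sum {ι : Type*} {s : Finset ι} {ψ : ι → ℕ → ℝ} (h : ∀ i ∈ s, HasSublinearDefect (ψ i)) :
    HasSublinearDefect fun n => ∑ i ∈ s, ψ i n := by
  choose! f hf_littleO hf_le using h
  refine ⟨fun n => ∑ i ∈ s, f i n, IsLittleO.fun_sum hf_littleO, fun j l hj hjl => ?_⟩
  simp only [← Finset.sum_add_distrib]
  exact Finset.sum_le_sum fun i hi => hf_le i hi j l hj hjl

lemma const_mul_rpow (β : ℝ) {γ : ℝ} (hγ : γ ≤ 1) :
    HasSublinearDefect fun n => β * (n : ℝ) ^ γ := by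
  rcases hγ.eq_or_lt with rfl | hγ_lt
  · refine ⟨0, isLittleO_zero _ _, fun j l _ _ => le_of_eq ?_⟩
    simp only [Real.rpow_one, Nat.cast_add, Pi.zero_apply]
    ring
  · refine ⟨fun n => |β| * 2 * (n : ℝ) ^ γ,
      (isLittleO_rpow_id_atTop hγ_lt).natCast_atTop.const_mul_left _, fun j l hj hjl => ?_⟩
    have h_abs := abs_rpow_add_rpow_sub_rpow_le (x := j) (y := l) hγ
      (by exact_mod_cast hj) (by exact_mod_cast hjl)
    have h_defect : β * ((j : ℝ) ^ γ + (l : ℝ) ^ γ - ((j : ℝ) + l) ^ γ)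
        ≤ |β| * (2 * (j : ℝ) ^ γ) :=
      (le_abs_self _).trans <| by rw [abs_mul]; gcongr
    push_cast
    linarith

end HasSublinearDefect

end Sublinear

section RapidScale

/-- The scale `exp (α n log n + ψ n)` to which rapidly divergent sequences are compared; `ψ` is the
correction to the leading growth `n ^ (α n)`. -/
noncomputable def rapidScale (α : ℝ) (ψ : ℕ → ℝ) (n : ℕ) : ℝ :=
  Real.exp (α * n * Real.log n + ψ n)

lemma rapidScale_pos (α : ℝ) (ψ : ℕ → ℝ) (n : ℕ) : 0 < rapidScale α ψ n :=
  Real.exp_pos _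

lemma mul_log_add_mul_log_le {x y : ℝ} (hx : 1 ≤ x) (hxy : x ≤ y) :
    x * Real.log x + y * Real.log y ≤ (x + y) * Real.log (x + y)
      - Real.log (x + y) - (x - 1) * Real.log 2 + Real.log x := by
  have hlog_y : Real.log y ≤ Real.log (x + y) := Real.log_le_log (by linarith) (by linarith)
  have hlog_x : Real.log x ≤ Real.log (x + y) - Real.log 2 := by
    rw [le_sub_iff_add_le', ← Real.log_mul two_ne_zero (by linarith)]
    exact Real.log_le_log (by linarith) (by linarith)
  calc x * Real.log x + y * Real.log y
      = Real.log x + (x - 1) * Real.log x + y * Real.log y := by ring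
    _ ≤ Real.log x + (x - 1) * (Real.log (x + y) - Real.log 2) + y * Real.log (x + y) := by
        gcongr
        linarith
    _ = _ := by ring

lemma exists_exponent_add_le {α : ℝ} {ψ : ℕ → ℝ} (hα : 0 < α) (hψ : HasSublinearDefect ψ) :
    ∃ ε > 0, ∃ M, ∀ j l : ℕ, 1 ≤ j → j ≤ l →
      (α * j * Real.log j + ψ j) + (α * l * Real.log l + ψ l)
        ≤ (α * (j + l : ℕ) * Real.log (j + l : ℕ) + ψ (j + l))
          - α * Real.log (j + l : ℕ) - ε * j + M := by
  obtain ⟨f, hf, hψf⟩ := hψ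
  have hlog2 : 0 < Real.log 2 := Real.log_pos one_lt_two
  have h_error : (fun n : ℕ => α * Real.log n + f n) =o[atTop] fun n : ℕ => (n : ℝ) :=
    (Real.isLittleO_log_id_atTop.natCast_atTop.const_mul_left α).add hf
  obtain ⟨M, hM⟩ := exists_le_mul_add_of_isLittleO h_error (half_pos (mul_pos hα hlog2))
  refine ⟨α * Real.log 2 / 2, by positivity, M + α * Real.log 2, fun j l hj hjl => ?_⟩
  have h_superadd := mul_le_mul_of_nonneg_left
    (mul_log_add_mul_log_le (x := j) (y := l) (by exact_mod_cast hj) (by exact_mod_cast hjl)) hα.le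
  push_cast
  linarith [hψf j l hj hjl, hM j]

lemma exists_rapidScale_mul_le {α : ℝ} {ψ : ℕ → ℝ} (hα : 0 < α) (hψ : HasSublinearDefect ψ) :
    ∃ r B : ℝ, 0 < r ∧ r < 1 ∧ 0 < B ∧ ∀ j l : ℕ, 1 ≤ j → j ≤ l →
      rapidScale α ψ j * rapidScale α ψ l
        ≤ r ^ j * (B * ((j + l : ℕ) : ℝ) ^ (-α) * rapidScale α ψ (j + l)) := by
  obtain ⟨ε, hε, M, h_exponent⟩ := exists_exponent_add_le hα hψ
  refine ⟨Real.exp (-ε), Real.exp M, Real.exp_pos _, Real.exp_lt_one_iff.mpr (neg_neg_of_pos hε),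
    Real.exp_pos _, fun j l hj hjl => ?_⟩
  have h_pos : (0 : ℝ) < (j + l : ℕ) := by exact_mod_cast Nat.add_pos_left hj l
  simp only [rapidScale, Real.rpow_def_of_pos h_pos, ← Real.exp_nat_mul, ← Real.exp_add]
  exact Real.exp_le_exp.2 (by linarith [h_exponent j l hj hjl])

end RapidScale

section Convolution

lemma sum_Ico_pow_add_pow_sub_le {r : ℝ} (hr0 : 0 ≤ r) (hr1 : r < 1) (n : ℕ) :
    ∑ k ∈ Finset.Ico 1 n, (r ^ k + r ^ (n - k)) ≤ 2 * (r / (1 - r)) := by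
  have h_reflect : ∑ k ∈ Finset.Ico 1 n, r ^ (n - k) = ∑ k ∈ Finset.Ico 1 n, r ^ k := by
    simpa using Finset.sum_Ico_reflect (fun k => r ^ k) 1 n.le_succ
  have h_geom : ∑ k ∈ Finset.Ico 1 n, r ^ k ≤ r / (1 - r) := by
    simpa using geom_sum_Ico_le_of_lt_one (m := 1) (n := n) hr0 hr1
  rw [Finset.sum_add_distrib, h_reflect]
  linarith

lemma sum_Ico_mul_sub_le_of_mul_le {w G : ℕ → ℝ} {r : ℝ} (hr0 : 0 ≤ r) (hr1 : r < 1)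
    (hG : ∀ n, 0 ≤ G n) (h : ∀ j l : ℕ, 1 ≤ j → j ≤ l → w j * w l ≤ r ^ j * G (j + l)) (n : ℕ) :
    ∑ k ∈ Finset.Ico 1 n, w k * w (n - k) ≤ 2 * (r / (1 - r)) * G n := by
  have h_term : ∀ k ∈ Finset.Ico 1 n, w k * w (n - k) ≤ (r ^ k + r ^ (n - k)) * G n := by
    intro k hk
    obtain ⟨hk1, hkn⟩ := Finset.mem_Ico.1 hk
    have hGn := hG n
    rcases le_total k (n - k) with hle | hle
    · have h_left := h k (n - k) hk1 hle
      rw [Nat.add_sub_cancel' hkn.le] at h_left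
      exact h_left.trans (by gcongr; exact le_add_of_nonneg_right (by positivity))
    · have h_right := h (n - k) k (Nat.sub_pos_of_lt hkn) hle
      rw [Nat.sub_add_cancel hkn.le, mul_comm] at h_right
      exact h_right.trans (by gcongr; exact le_add_of_nonneg_left (by positivity))
  calc ∑ k ∈ Finset.Ico 1 n, w k * w (n - k)
      ≤ ∑ k ∈ Finset.Ico 1 n, (r ^ k + r ^ (n - k)) * G n := Finset.sum_le_sum h_term
    _ = (∑ k ∈ Finset.Ico 1 n, (r ^ k + r ^ (n - k))) * G n := by rw [Finset.sum_mul]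
    _ ≤ 2 * (r / (1 - r)) * G n :=
        mul_le_mul_of_nonneg_right (sum_Ico_pow_add_pow_sub_le hr0 hr1 n) (hG n)

lemma isBigO_sum_Ico_mul_sub_div_of_isTheta {𝕜 : Type*} [NormedDivisionRing 𝕜] {a : ℕ → 𝕜}
    {w : ℕ → ℝ} (hw : ∀ n, 0 < w n) (ha : a =Θ[atTop] w) :
    (fun n => ∑ k ∈ Finset.Ico 1 n, a k * a (n - k) / a n) =O[atTop]
      fun n => (∑ k ∈ Finset.Ico 1 n, w k * w (n - k)) / w n := by
  obtain ⟨K, hK, h_upper⟩ := bound_of_isBigO_nat_atTop ha.isBigO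
  replace h_upper (n : ℕ) : ‖a n‖ ≤ K * w n := by
    simpa only [Real.norm_of_nonneg (hw n).le] using h_upper (hw n).ne'
  obtain ⟨c, hc, h_lower⟩ := ha.isBigO_symm.exists_pos
  refine IsBigO.of_bound (K * K * c) ?_
  filter_upwards [h_lower.bound] with n hn
  rw [Real.norm_of_nonneg (hw n).le] at hn
  have h_term (k : ℕ) :
      ‖a k * a (n - k) / a n‖ ≤ K * K * c * (w k * w (n - k) / w n) := by
    have hwn := hw n
    have hwk := hw k
    have hwnk := hw (n - k)
    calc ‖a k * a (n - k) / a n‖ = ‖a k‖ * ‖a (n - k)‖ / ‖a n‖ := by rw [norm_div, norm_mul]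
      _ ≤ K * w k * (K * w (n - k)) / (w n / c) := by
          gcongr
          exacts [h_upper k, h_upper (n - k), (div_le_iff₀' hc).2 hn]
      _ = K * K * c * (w k * w (n - k) / w n) := by field_simp
  calc ‖∑ k ∈ Finset.Ico 1 n, a k * a (n - k) / a n‖
      ≤ ∑ k ∈ Finset.Ico 1 n, K * K * c * (w k * w (n - k) / w n) :=
        norm_sum_le_of_le _ fun k _ => h_term k
    _ = K * K * c * ((∑ k ∈ Finset.Ico 1 n, w k * w (n - k)) / w n) := by
        rw [← Finset.mul_sum, Finset.sum_div]
    _ ≤ _ := by gcongr; exact Real.le_norm_self _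

end Convolution

lemma isTheta_of_tendsto_div_const_mul {ι 𝕜 : Type*} [NormedField 𝕜] {l : Filter ι} {u v : ι → 𝕜}
    {C : 𝕜} (hC : C ≠ 0) (hv : ∀ᶠ i in l, v i ≠ 0)
    (h : Tendsto (fun i => u i / (C * v i)) l (𝓝 1)) : u =Θ[l] v := by
  have h_equiv : u ~[l] fun i => C * v i :=
    (isEquivalent_iff_tendsto_one (hv.mono fun _ hi => mul_ne_zero hC hi)).2 h
  exact (isTheta_const_mul_right hC).1 h_equiv.isTheta

theorem rapidly_divergent_sequences_general {𝕜 : Type*} [NormedDivisionRing 𝕜] {a : ℕ → 𝕜} {α : ℝ}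
    {ψ : ℕ → ℝ} (hα : 0 < α) (hψ : HasSublinearDefect ψ) (ha : a =Θ[atTop] rapidScale α ψ) :
    (fun n : ℕ => ∑ k ∈ Finset.Ico 1 n, a k * a (n - k) / a n) =O[atTop]
      fun n : ℕ => (n : ℝ) ^ (-α) := by
  obtain ⟨r, B, hr0, hr1, hB, h_mul⟩ := exists_rapidScale_mul_le hα hψ
  have hw := rapidScale_pos α ψ
  have hG (n : ℕ) : 0 ≤ B * (n : ℝ) ^ (-α) * rapidScale α ψ n := by have := hw n; positivity
  refine (isBigO_sum_Ico_mul_sub_div_of_isTheta hw ha).trans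
    (IsBigO.of_bound (2 * (r / (1 - r)) * B) (Eventually.of_forall fun n => ?_))
  have h_nonneg : 0 ≤ ∑ k ∈ Finset.Ico 1 n, rapidScale α ψ k * rapidScale α ψ (n - k) :=
    Finset.sum_nonneg fun k _ => (mul_pos (hw k) (hw (n - k))).le
  rw [Real.norm_of_nonneg (div_nonneg h_nonneg (hw n).le), Real.norm_of_nonneg (by positivity),
    div_le_iff₀ (hw n)]
  linarith [sum_Ico_mul_sub_le_of_mul_le hr0.le hr1 hG h_mul n]

theorem rapidly_divergent_sequences (a : ℕ → ℝ) (C α : ℝ) (hC : 0 < C) (hα : 0 < α)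
    (m : ℕ) (β γ : Fin m → ℝ) (hγ : ∀ i, 0 < γ i ∧ γ i ≤ 1)
    (ha : Filter.Tendsto (fun n : ℕ => a n /
        (C * Real.exp (α * (n : ℝ) * Real.log (n : ℝ) + ∑ i, β i * (n : ℝ) ^ (γ i))))
      Filter.atTop (𝓝 1)) :
    (fun n : ℕ => ∑ k ∈ Finset.Ico 1 n, a k * a (n - k) / a n) =O[Filter.atTop]
      (fun n : ℕ => (n : ℝ) ^ (-α)) := by
  have hψ : HasSublinearDefect fun n => ∑ i, β i * (n : ℝ) ^ γ i :=
    .sum fun i _ => .const_mul_rpow (β i) (hγ i).2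
  exact rapidly_divergent_sequences_general hα hψ <|
    isTheta_of_tendsto_div_const_mul hC.ne' (.of_forall fun n => (rapidScale_pos α _ n).ne') ha
end
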